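/- For every v ∈ ℝ^{2n} and c > 0, the function z ↦ c‖z‖_{2,1|ℝ^{2n}} + (1/2)‖z − v‖₂² has a unique global minimizer z* over ℝ^{2n}, and it is given pairwise by: for each j ∈ {1,…,n}, setting d_j = (v_j, v_{n+j}) ∈ ℝ², one has (z*_j, z*_{n+j}) = max{ (‖d_j‖₂ − c)/‖d_j‖₂ , 0 } · d_j, interpreted as (0,0) when d_j = (0,0). -/

import Mathlib

/-!
The objective splits into `n` independent problems on `ℝ²`, one for each pair `(z_j, z_{n+j})`.
For a single pair with data `d`, write `w` for the shrunk vector. The residual `g = d - w` satisfies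
`‖g‖ ≤ c` and `⟨g, w⟩ = c‖w‖`, i.e. `g` is a subgradient of `c‖·‖` at `w`. By Cauchy–Schwarz this
gives the quadratic growth inequality
`c‖w‖ + ½‖w - d‖² + ½‖x - w‖² ≤ c‖x‖ + ½‖x - d‖²` for every `x` (`pair_growth`).
Summing over the pairs, the objective at `z` exceeds the one at `z*` by at least `½‖z - z*‖²`, which
yields both minimality and uniqueness.
-/

open scoped BigOperators

/-- First index of the `j`-th pair in `ℝ^{2n}`. -/
def pidx₀ {n : ℕ} (j : Fin n) : Fin (2 * n) := ⟨j.1, by have := j.2; omega⟩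

/-- Second index of the `j`-th pair in `ℝ^{2n}`. -/
def pidx₁ {n : ℕ} (j : Fin n) : Fin (2 * n) := ⟨n + j.1, by have := j.2; omega⟩

/-- The `(2,1)`-norm on `ℝ^{2n}`: `‖v‖_{2,1} = ∑_j sqrt(v_j² + v_{n+j}²)`. -/
noncomputable def norm21 {n : ℕ} (v : Fin (2 * n) → ℝ) : ℝ :=
  ∑ j : Fin n, Real.sqrt ((v (pidx₀ j)) ^ 2 + (v (pidx₁ j)) ^ 2)

/-- Squared Euclidean norm. -/
def sqnorm {ι : Type*} [Fintype ι] (v : ι → ℝ) : ℝ := ∑ i, (v i) ^ 2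

/-- The shrinkage factor of a pair `(a, b)` with threshold `c`; division by zero makes the quotient
`0` at `(a, b) = (0, 0)`. -/
noncomputable def shrink (c a b : ℝ) : ℝ :=
  max ((Real.sqrt (a ^ 2 + b ^ 2) - c) / Real.sqrt (a ^ 2 + b ^ 2)) 0

lemma inner_le_sqrt_mul_sqrt (a b x y : ℝ) :
    a * x + b * y ≤ Real.sqrt (a ^ 2 + b ^ 2) * Real.sqrt (x ^ 2 + y ^ 2) := by
  rw [← Real.sqrt_mul (by positivity)]
  apply Real.le_sqrt_of_sq_le
  nlinarith [sq_nonneg (a * y - b * x)]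

/-- Quadratic growth from a subgradient: if `g = d - w` has norm at most `c` and
`⟨g, w⟩ = c‖w‖`, then `w` minimizes `c‖x‖ + ½‖x - d‖²` with a margin of `½‖x - w‖²`. -/
lemma growth_of_subgradient {c a b p q : ℝ}
    (hg : Real.sqrt ((a - p) ^ 2 + (b - q) ^ 2) ≤ c)
    (hw : (a - p) * p + (b - q) * q = c * Real.sqrt (p ^ 2 + q ^ 2)) (x y : ℝ) :
    c * Real.sqrt (p ^ 2 + q ^ 2) + 1 / 2 * ((p - a) ^ 2 + (q - b) ^ 2)
        + 1 / 2 * ((x - p) ^ 2 + (y - q) ^ 2)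
      ≤ c * Real.sqrt (x ^ 2 + y ^ 2) + 1 / 2 * ((x - a) ^ 2 + (y - b) ^ 2) := by
  have h1 := inner_le_sqrt_mul_sqrt (a - p) (b - q) x y
  have h2 := mul_le_mul_of_nonneg_right hg (Real.sqrt_nonneg (x ^ 2 + y ^ 2))
  nlinarith

lemma pair_growth {c : ℝ} (hc : 0 < c) (a b x y : ℝ) :
    c * Real.sqrt ((shrink c a b * a) ^ 2 + (shrink c a b * b) ^ 2)
        + 1 / 2 * ((shrink c a b * a - a) ^ 2 + (shrink c a b * b - b) ^ 2)
        + 1 / 2 * ((x - shrink c a b * a) ^ 2 + (y - shrink c a b * b) ^ 2)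
      ≤ c * Real.sqrt (x ^ 2 + y ^ 2) + 1 / 2 * ((x - a) ^ 2 + (y - b) ^ 2) := by
  have hr0 : 0 ≤ Real.sqrt (a ^ 2 + b ^ 2) := Real.sqrt_nonneg _
  have hrr : Real.sqrt (a ^ 2 + b ^ 2) ^ 2 = a ^ 2 + b ^ 2 := Real.sq_sqrt (by positivity)
  rcases le_or_gt (Real.sqrt (a ^ 2 + b ^ 2)) c with h | h
  · have ht : shrink c a b = 0 :=
      max_eq_right (div_nonpos_of_nonpos_of_nonneg (by linarith) hr0)
    apply growth_of_subgradient <;> simp [ht, h]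
  · have ht : shrink c a b
        = (Real.sqrt (a ^ 2 + b ^ 2) - c) / Real.sqrt (a ^ 2 + b ^ 2) :=
      max_eq_left (div_nonneg (by linarith) hr0)
    rw [ht]
    generalize Real.sqrt (a ^ 2 + b ^ 2) = r at *
    have hr : 0 < r := hc.trans h
    have htr : (r - c) / r * r = r - c := div_mul_cancel₀ _ hr.ne'
    generalize (r - c) / r = t at *
    have hw : Real.sqrt ((t * a) ^ 2 + (t * b) ^ 2) = r - c := by
      rw [show (t * a) ^ 2 + (t * b) ^ 2 = (r - c) ^ 2 by
        rw [← htr]; linear_combination (-t ^ 2) * hrr]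
      exact Real.sqrt_sq (by linarith)
    apply growth_of_subgradient
    · rw [show (a - t * a) ^ 2 + (b - t * b) ^ 2 = c ^ 2 by
        rw [show c = r - t * r by linarith]; linear_combination (-(1 - t) ^ 2) * hrr]
      exact (Real.sqrt_sq hc.le).le
    · rw [hw, ← htr, show c = r - t * r by linarith]
      linear_combination (-(1 - t) * t) * hrr

/-- The index set of `ℝ^{2n}` as the disjoint union of first and second indices of pairs. -/
def pairEquiv (n : ℕ) : Fin n ⊕ Fin n ≃ Fin (2 * n) :=
  finSumFinEquiv.trans (finCongr (two_mul n).symm)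

lemma pairEquiv_inl {n : ℕ} (j : Fin n) : pairEquiv n (Sum.inl j) = pidx₀ j := by
  ext; simp [pairEquiv, pidx₀]

lemma pairEquiv_inr {n : ℕ} (j : Fin n) : pairEquiv n (Sum.inr j) = pidx₁ j := by
  ext; simp [pairEquiv, pidx₁, add_comm]

lemma sqnorm_eq_sum_pairs {n : ℕ} (u : Fin (2 * n) → ℝ) :
    sqnorm u = ∑ j : Fin n, ((u (pidx₀ j)) ^ 2 + (u (pidx₁ j)) ^ 2) := by
  rw [sqnorm, ← (pairEquiv n).sum_comp, Fintype.sum_sum_type, Finset.sum_add_distrib]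
  simp only [pairEquiv_inl, pairEquiv_inr]

lemma eq_of_sqnorm_sub_nonpos {ι : Type*} [Fintype ι] {u w : ι → ℝ}
    (h : sqnorm (u - w) ≤ 0) : u = w := by
  have h0 : ∑ i, ((u - w) i) ^ 2 = 0 :=
    le_antisymm h (Finset.sum_nonneg fun i _ => sq_nonneg _)
  funext i
  have hi := (Finset.sum_eq_zero_iff_of_nonneg fun i _ => sq_nonneg _).1 h0 i (Finset.mem_univ i)
  exact sub_eq_zero.1 (pow_eq_zero_iff two_ne_zero |>.1 hi)

/-- for `v ∈ ℝ^{2n}` and `c > 0`, the function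
`z ↦ c‖z‖_{2,1} + (1/2)‖z − v‖₂²` has a unique global minimizer `z*`, given
pairwise by the shrinkage formula (the zero vector on pairs with `d_j = 0`;
in Lean division by zero yields `0`, so the formula covers that case). -/
theorem prox_norm21_pairwise_shrinkage
    (n : ℕ) (hn : 0 < n) (v : Fin (2 * n) → ℝ) (c : ℝ) (hc : 0 < c) :
    ∃ zstar : Fin (2 * n) → ℝ,
      (∀ z : Fin (2 * n) → ℝ,
          c * norm21 zstar + 1 / 2 * sqnorm (zstar - v)
            ≤ c * norm21 z + 1 / 2 * sqnorm (z - v)) ∧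
      (∀ z : Fin (2 * n) → ℝ,
          (∀ z' : Fin (2 * n) → ℝ,
              c * norm21 z + 1 / 2 * sqnorm (z - v)
                ≤ c * norm21 z' + 1 / 2 * sqnorm (z' - v)) →
          z = zstar) ∧
      (∀ j : Fin n,
          zstar (pidx₀ j)
            = max ((Real.sqrt ((v (pidx₀ j)) ^ 2 + (v (pidx₁ j)) ^ 2) - c)
                    / Real.sqrt ((v (pidx₀ j)) ^ 2 + (v (pidx₁ j)) ^ 2)) 0
            * v (pidx₀ j) ∧
          zstar (pidx₁ j)
            = max ((Real.sqrt ((v (pidx₀ j)) ^ 2 + (v (pidx₁ j)) ^ 2) - c)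
                    / Real.sqrt ((v (pidx₀ j)) ^ 2 + (v (pidx₁ j)) ^ 2)) 0
            * v (pidx₁ j)) := by
  obtain ⟨w, hw₀, hw₁⟩ : ∃ w : Fin (2 * n) → ℝ,
      (∀ j, w (pidx₀ j) = shrink c (v (pidx₀ j)) (v (pidx₁ j)) * v (pidx₀ j)) ∧
      (∀ j, w (pidx₁ j) = shrink c (v (pidx₀ j)) (v (pidx₁ j)) * v (pidx₁ j)) := by
    refine ⟨fun i => Sum.elim
      (fun j => shrink c (v (pidx₀ j)) (v (pidx₁ j)) * v (pidx₀ j))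
      (fun j => shrink c (v (pidx₀ j)) (v (pidx₁ j)) * v (pidx₁ j)) ((pairEquiv n).symm i),
      fun j => ?_, fun j => ?_⟩
    · simp [← pairEquiv_inl]
    · simp [← pairEquiv_inr]
  have growth : ∀ z : Fin (2 * n) → ℝ,
      c * norm21 w + 1 / 2 * sqnorm (w - v) + 1 / 2 * sqnorm (z - w)
        ≤ c * norm21 z + 1 / 2 * sqnorm (z - v) := by
    intro z
    simp only [sqnorm_eq_sum_pairs, norm21, Finset.mul_sum, ← Finset.sum_add_distrib]
    refine Finset.sum_le_sum fun j _ => ?_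
    simp only [Pi.sub_apply, hw₀, hw₁]
    exact pair_growth hc _ _ _ _
  refine ⟨w, fun z => ?_, fun z hz => ?_, fun j => ⟨hw₀ j, hw₁ j⟩⟩
  · have hnn : 0 ≤ sqnorm (z - w) := Finset.sum_nonneg fun i _ => sq_nonneg _
    linarith [growth z]
  · exact eq_of_sqnorm_sub_nonpos (by linarith [growth z, hz w])
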